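/- arXiv:2203.17096 — 5 statements merged into one kernel-verified Lean document; each statement's English description precedes it below -/
import Mathlib

section
/- For every α ∈ P(L(S/G)), the initial-state estimate equals the set of first components of the current-state estimate of the augmented system under the same supervisor: E^I_{S/G}(α) = I(E^C_{S/~G}(α)). -/
open scoped Classical

namespace DES

variable {X E Z : Type*}

/-- Run of a partial automaton on a string of events. -/
def runStr (δ : X → E → Option X) : X → List E → Option X
  | x, [] => some x
  | x, σ :: s => (δ x σ).bind fun y => runStr δ y s

/-- Open-loop language generated from a state. -/
def LangFrom (δ : X → E → Option X) (x0 : X) : Set (List E) :=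
  {s | (runStr δ x0 s).isSome}

/-- Open-loop language of the plant. -/
def Lang (δ : X → E → Option X) (X0 : Set X) : Set (List E) :=
  {s | ∃ x0 ∈ X0, s ∈ LangFrom δ x0}

/-- Natural projection erasing unobservable events. -/
noncomputable def proj (Eobs : Set E) (s : List E) : List E :=
  s.filter fun e => decide (e ∈ Eobs)

/-- Closed-loop language of `S/G` from initial state `x0`. -/
inductive CLLang (δ : X → E → Option X) (Eobs : Set E) (S : List E → Set E) (x0 : X) :
    List E → Prop
  | nil : CLLang δ Eobs S x0 []
  | snoc (s : List E) (σ : E) : CLLang δ Eobs S x0 s →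
      (runStr δ x0 (s ++ [σ])).isSome → σ ∈ S (proj Eobs s) → CLLang δ Eobs S x0 (s ++ [σ])

/-- Closed-loop language of `S/G`. -/
def CLLangAll (δ : X → E → Option X) (Eobs : Set E) (S : List E → Set E) (X0 : Set X) :
    Set (List E) := {s | ∃ x0 ∈ X0, CLLang δ Eobs S x0 s}

/-- Projection of a language. -/
def projSet (Eobs : Set E) (L : Set (List E)) : Set (List E) := proj Eobs '' L

/-- Current-state estimate of the closed-loop system. -/
def ECest (δ : X → E → Option X) (Eobs : Set E) (S : List E → Set E) (X0 : Set X)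
    (α : List E) : Set X :=
  {x | ∃ x0 ∈ X0, ∃ s, CLLang δ Eobs S x0 s ∧ proj Eobs s = α ∧ runStr δ x0 s = some x}

/-- Initial-state estimate of the closed-loop system. -/
def EIest (δ : X → E → Option X) (Eobs : Set E) (S : List E → Set E) (X0 : Set X)
    (α : List E) : Set X :=
  {x0 | x0 ∈ X0 ∧ ∃ s, CLLang δ Eobs S x0 s ∧ proj Eobs s = α}

/-- Unobservable reach of `q` under control decision `γ`. -/
def URset (δ : X → E → Option X) (Euo γ : Set E) (q : Set X) : Set X :=
  {y | ∃ x ∈ q, ∃ s : List E, (∀ e ∈ s, e ∈ Euo ∩ γ) ∧ runStr δ x s = some y}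

/-- Observable reach of `q` upon occurrence of `σ`. -/
def NXset (δ : X → E → Option X) (σ : E) (q : Set X) : Set X :=
  {y | ∃ x ∈ q, δ x σ = some y}

/-- Events that can be observed from `q` under control decision `γ`. -/
def Oset (δ : X → E → Option X) (Eobs Euo : Set E) (q : Set X) (γ : Set E) : Set E :=
  {σ | σ ∈ Eobs ∩ γ ∧ ∃ x ∈ q, ∃ w : List E, (∀ e ∈ w, e ∈ Euo ∩ γ) ∧
      (runStr δ x (w ++ [σ])).isSome}

/-- Transition function of the augmented system `~G`. -/
def augDelta (δ : X → E → Option X) : X × X → E → Option (X × X) :=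
  fun p σ => (δ p.2 σ).map fun y => (p.1, y)

/-- Initial states of the augmented system. -/
def augX0 (X0 : Set X) : Set (X × X) := {p | p.1 ∈ X0 ∧ p.2 = p.1}

/-- First components of a set of augmented states. -/
def Iset (qt : Set (X × X)) : Set X := Prod.fst '' qt

/-- Active events of the supervisor automaton `H` at state `z`. -/
def ΔH (ξ : Z → E → Option Z) (z : Z) : Set E := {σ | (ξ z σ).isSome}

/-- Active events at `some z`, and `∅` at the attack-detected state `z_att = none`. -/
def ΔHopt (ξ : Z → E → Option Z) : Option Z → Set E
  | some z => ΔH ξ z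
  | none => ∅

/-- `H = (Z, Σ, ξ, z₀)` realizes supervisor `S`. -/
def Realizes (ξ : Z → E → Option Z) (z0 : Z) (δ : X → E → Option X)
    (Eobs : Set E) (S : List E → Set E) (X0 : Set X) : Prop :=
  (∀ z σ z', ξ z σ = some z' → z' ≠ z → σ ∈ Eobs) ∧
  (∀ s ∈ CLLangAll δ Eobs S X0, ∃ z, runStr ξ z0 s = some z ∧ ΔH ξ z = S (proj Eobs s))

/-- Product automaton `G × H`. -/
def prodDelta (δ : X → E → Option X) (ξ : Z → E → Option Z) :
    X × Z → E → Option (X × Z) :=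
  fun p σ => (δ p.1 σ).bind fun x' => (ξ p.2 σ).map fun z' => (x', z')

/-- Environment states of the AAS: `(q, qt, z)` with `z = none` encoding `z_att`. -/
abbrev EnvState (X Z : Type*) := Set X × Set (X × X) × Option Z

/-- Attack states of the AAS: `(q, qt, z, σ)`. -/
abbrev AtkState (X Z E : Type*) := Set X × Set (X × X) × Z × E

/-- States of the AAS. -/
abbrev MState (X Z E : Type*) := EnvState X Z ⊕ AtkState X Z E

/-- Events of the AAS: `Sum.inl σ` is a genuine event, `Sum.inr (some σ)` is `σ̂`,
and `Sum.inr none` is `ε̂`. -/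
abbrev MEvent (E : Type*) := E ⊕ Option E

/-- Action space `V(σ)` of the attacker. -/
def Vmap (Ev : Set E) (σ : E) : Set (Option E) :=
  if σ ∈ Ev then {a | ∃ σ', a = some σ' ∧ σ' ∈ Ev} ∪ {none} else {some σ}

/-- Transition function of the All Attack Structure. -/
noncomputable def AASf (δ : X → E → Option X) (Eobs Euo Ev : Set E)
    (ξ : Z → E → Option Z) : MState X Z E → MEvent E → Option (MState X Z E)
  | Sum.inl (q, qt, some z), Sum.inl σ =>
      if σ ∈ Oset (augDelta δ) Eobs Euo qt (ΔH ξ z) then some (Sum.inr (q, qt, z, σ))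
      else none
  | Sum.inr (q, qt, z, σ), Sum.inr a =>
      if a ∈ Vmap Ev σ then
        let q' : Set X := match a with
          | some σa => NXset δ σa (URset δ Euo (ΔH ξ z) q)
          | none => URset δ Euo (ΔH ξ z) q
        let qt' : Set (X × X) := NXset (augDelta δ) σ (URset (augDelta δ) Euo (ΔH ξ z) qt)
        if q'.Nonempty then
          match a with
          | some σa => (ξ z σa).map fun z' => Sum.inl (q', qt', some z')
          | none => some (Sum.inl (q', qt', some z))
        else some (Sum.inl (q', qt', (none : Option Z)))
      else none
  | _, _ => none

/-- Initial state of the AAS. -/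
def AASq0 (X0 : Set X) (z0 : Z) : MState X Z E := Sum.inl (X0, augX0 X0, some z0)

/-- Actual observation of an extended string. -/
def obs : List (MEvent E) → List E :=
  List.filterMap fun e => match e with | Sum.inl σ => some σ | Sum.inr _ => none

/-- Tampered (doctored) observation of an extended string. -/
def tam : List (MEvent E) → List E :=
  List.filterMap fun e => match e with | Sum.inl _ => none | Sum.inr a => a

/-- `h` is an extended string of the structure with transition function `f`
ending at an environment state. -/
def LeM (f : MState X Z E → MEvent E → Option (MState X Z E)) (q0 : MState X Z E)
    (h : List (MEvent E)) : Prop :=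
  ∃ qe : EnvState X Z, runStr f q0 h = some (Sum.inl qe)

/-- `A` is an attacker (with `none` encoding `ε`). -/
def IsAttacker (δ : X → E → Option X) (Eobs Ev : Set E) (X0 : Set X)
    (A : List E → Option E) : Prop :=
  A [] = none ∧
  ∀ α σ, (α ++ [σ]) ∈ projSet Eobs (Lang δ X0) →
    (σ ∉ Ev → A (α ++ [σ]) = some σ) ∧ (σ ∈ Ev → A (α ++ [σ]) ∈ Vmap Ev σ)

/-- The string-modification map `g_A` induced by attacker `A`. -/
def gA (A : List E → Option E) (α : List E) : List E :=
  (List.range α.length).filterMap fun i => A (α.take (i + 1))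

/-- The extended string `α_A` determined by attacker `A` and observation `α`
(the first argument is the accumulated prefix). -/
def extStr (A : List E → Option E) : List E → List E → List (MEvent E)
  | _, [] => []
  | pre, σ :: rest =>
      Sum.inl σ :: Sum.inr (A (pre ++ [σ])) :: extStr A (pre ++ [σ]) rest

/-- Positive detected environment state. -/
def PosDet (Xsec : Set X) (qe : EnvState X Z) : Prop := Iset qe.2.1 ⊆ Xsec

/-- Negative detected environment state. -/
def NegDet (Xsec : Set X) (qe : EnvState X Z) : Prop := Iset qe.2.1 ∩ Xsec = ∅

/-- Undetectable environment state. -/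
def Undet (δ : X → E → Option X) (Euo : Set E) (ξ : Z → E → Option Z)
    (Xsec : Set X) (qe : EnvState X Z) : Prop :=
  (Iset qe.2.1 ∩ Xsec).Nonempty ∧
  ∀ p ∈ URset (augDelta δ) Euo (ΔHopt ξ qe.2.2) qe.2.1, p.1 ∈ Xsec →
    ∃ p' ∈ URset (augDelta δ) Euo (ΔHopt ξ qe.2.2) qe.2.1, p'.2 = p.2 ∧ p'.1 ∉ Xsec

/-- Transition function of the simplified AAS: all outgoing transitions from
detected and undetectable environment states are removed. -/
noncomputable def SAASf (δ : X → E → Option X) (Eobs Euo Ev : Set E)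
    (ξ : Z → E → Option Z) (Xsec : Set X) :
    MState X Z E → MEvent E → Option (MState X Z E) := fun st e =>
  match st with
  | Sum.inl qe =>
      if PosDet Xsec qe ∨ NegDet Xsec qe ∨ Undet δ Euo ξ Xsec qe then none
      else AASf δ Eobs Euo Ev ξ st e
  | Sum.inr _ => AASf δ Eobs Euo Ev ξ st e

/-- Reachability in a structure over AAS states. -/
def ReachableFrom (f : MState X Z E → MEvent E → Option (MState X Z E))
    (st st' : MState X Z E) : Prop := ∃ t, runStr f st t = some st'

/-- `fm` is (the transition function of) a single attack structure of the
simplified AAS. -/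
def IsSAS (δ : X → E → Option X) (Eobs Euo Ev : Set E) (ξ : Z → E → Option Z)
    (z0 : Z) (X0 Xsec : Set X)
    (fm : MState X Z E → MEvent E → Option (MState X Z E)) : Prop :=
  (∀ st e st', fm st e = some st' → SAASf δ Eobs Euo Ev ξ Xsec st e = some st') ∧
  (∀ qa : AtkState X Z E, ReachableFrom fm (AASq0 X0 z0) (Sum.inr qa) →
      ∃! e, (fm (Sum.inr qa) e).isSome = true) ∧
  (∀ qe : EnvState X Z, ReachableFrom fm (AASq0 X0 z0) (Sum.inl qe) →
      ∀ e, fm (Sum.inl qe) e = SAASf δ Eobs Euo Ev ξ Xsec (Sum.inl qe) e)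

/-- `Am` is the attack strategy induced by the single attack structure `fm`. -/
def InducedStrategy (δ : X → E → Option X) (Eobs : Set E) (X0 : Set X)
    (fm : MState X Z E → MEvent E → Option (MState X Z E)) (z0 : Z)
    (Am : List E → Option E) : Prop :=
  Am [] = none ∧
  ∀ α σ, (α ++ [σ]) ∈ projSet Eobs (Lang δ X0) →
    ((∀ h, LeM fm (AASq0 X0 z0) h → obs h ≠ α ++ [σ]) → Am (α ++ [σ]) = some σ) ∧
    (∀ h, LeM fm (AASq0 X0 z0) h → obs h = α ++ [σ] →
        h.getLast? = some (Sum.inr (Am (α ++ [σ]))))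

/-- Attacker `A` is IS-detectable. -/
def ISDetectable (δ : X → E → Option X) (Eobs : Set E) (S : List E → Set E)
    (X0 Xsec : Set X) (A : List E → Option E) : Prop :=
  ∃ α σ, σ ∈ Eobs ∧
    (α ++ [σ]) ∈ projSet Eobs (CLLangAll δ Eobs (fun β => S (gA A β)) X0) ∧
    (ECest δ Eobs S X0 (gA A α)).Nonempty ∧
    EIest δ Eobs (fun β => S (gA A β)) X0 (α ++ [σ]) ⊆ Xsec


theorem aux_run (δ : X → E → Option X) (a : X) (s : List E) : ∀ x : X,
    runStr (augDelta δ) (a, x) s = (runStr δ x s).map fun y => (a, y) := by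
  induction s with
  | nil => intro x; rfl
  | cons σ s ih =>
    intro x
    simp only [runStr, augDelta]
    cases h : δ x σ with
    | none => rfl
    | some y => exact ih y

theorem aux_cl (δ : X → E → Option X) (Eobs : Set E) (S : List E → Set E) (a : X) (s : List E) :
    CLLang (augDelta δ) Eobs S (a, a) s ↔ CLLang δ Eobs S a s := by
  constructor
  · intro h
    induction h with
    | nil => exact CLLang.nil
    | snoc s σ _ h2 h3 ih =>
      exact CLLang.snoc s σ ih (by simpa [aux_run] using h2) h3
  · intro h
    induction h with
    | nil => exact CLLang.nil
    | snoc s σ _ h2 h3 ih =>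
      exact CLLang.snoc s σ ih (by simpa [aux_run] using h2) h3

theorem aux_some (δ : X → E → Option X) (Eobs : Set E) (S : List E → Set E) (a : X) (s : List E)
    (h : CLLang δ Eobs S a s) : ∃ x, runStr δ a s = some x := by
  cases h with
  | nil => exact ⟨a, rfl⟩
  | snoc s σ _ h2 _ => exact Option.isSome_iff_exists.mp h2

/-! ## STATEMENT 1 -/
theorem stmt1 [Fintype X] [Fintype E] (δ : X → E → Option X) (Eobs : Set E)
    (Euc : Set E) (S : List E → Set E) (hΓ : ∀ α, Euc ⊆ S α) (X0 : Set X) :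
    ∀ α ∈ projSet Eobs (CLLangAll δ Eobs S X0),
      EIest δ Eobs S X0 α = Iset (ECest (augDelta δ) Eobs S (augX0 X0) α) := by
  intro α _
  ext a
  constructor
  · rintro ⟨ha, s, hs, hp⟩
    obtain ⟨x, hx⟩ := aux_some δ Eobs S a s hs
    refine ⟨(a, x), ⟨(a, a), ⟨ha, rfl⟩, s, (aux_cl δ Eobs S a s).2 hs, hp, ?_⟩, rfl⟩
    rw [aux_run, hx]; rfl
  · rintro ⟨⟨b, x⟩, ⟨⟨c, d⟩, ⟨hc, hd⟩, s, hs, hp, hr⟩, hb⟩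
    simp only at hc hd hb
    subst hd hb
    rw [aux_run] at hr
    obtain ⟨y, _, hy⟩ := Option.map_eq_some_iff.mp hr
    obtain rfl := (Prod.mk.inj hy).1
    exact ⟨hc, s, (aux_cl δ Eobs S _ s).1 hs, hp⟩

end DES
end

section
/- The current-state estimate of the closed-loop system satisfies the recursion: E^C_{S/G}(ε) = UR_{S(ε)}(X₀), and for every ασ ∈ P(L(S/G)) with σ ∈ Σ_o, E^C_{S/G}(ασ) = UR_{S(ασ)}(NX_σ(E^C_{S/G}(α))). -/
open scoped Classical

namespace DES

variable {X E Z : Type*}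

theorem aux_run_append (δ : X → E → Option X) (s t : List E) (x : X) :
    runStr δ x (s ++ t) = (runStr δ x s).bind fun y => runStr δ y t := by
  induction s generalizing x with
  | nil => simp [runStr]
  | cons a s ih =>
    simp only [List.cons_append, runStr]
    cases δ x a with
    | none => rfl
    | some y => simp [ih]

theorem aux_proj_append (Eobs : Set E) (s t : List E) :
    proj Eobs (s ++ t) = proj Eobs s ++ proj Eobs t := by
  simp [proj]

theorem aux_proj_obs (Eobs : Set E) (σ : E) (h : σ ∈ Eobs) : proj Eobs [σ] = [σ] := by
  simp [proj, h]

theorem aux_proj_uo (Eobs : Set E) (w : List E) (h : ∀ e ∈ w, e ∉ Eobs) :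
    proj Eobs w = [] := by
  simpa [proj] using h

theorem aux_extend (δ : X → E → Option X) (Eobs : Set E) (S : List E → Set E) (x0 : X)
    (s w : List E) (hs : CLLang δ Eobs S x0 s)
    (hw : ∀ e ∈ w, e ∉ Eobs ∧ e ∈ S (proj Eobs s))
    (hr : (runStr δ x0 (s ++ w)).isSome) : CLLang δ Eobs S x0 (s ++ w) := by
  induction w using List.reverseRecOn with
  | nil => simpa using hs
  | append_singleton w a ih =>
    rw [← List.append_assoc] at hr ⊢
    have hr' : (runStr δ x0 (s ++ w)).isSome := by
      rw [aux_run_append] at hr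
      cases h : runStr δ x0 (s ++ w) with
      | none => simp [h] at hr
      | some y => rfl
    refine CLLang.snoc _ _ (ih (fun e he => hw e (by simp [he])) hr') hr ?_
    rw [aux_proj_append, aux_proj_uo Eobs w (fun e he => (hw e (by simp [he])).1),
      List.append_nil]
    exact (hw a (by simp)).2

theorem aux_nil (δ : X → E → Option X) (Eobs : Set E) (S : List E → Set E) (x0 : X)
    (t : List E) (ht : CLLang δ Eobs S x0 t) (hp : proj Eobs t = []) :
    ∀ e ∈ t, e ∉ Eobs ∧ e ∈ S [] := by
  induction ht with
  | nil => simp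
  | snoc s a hs hr ha ih =>
    rw [aux_proj_append, List.append_eq_nil_iff] at hp
    have h2 : a ∉ Eobs := by simpa [proj] using hp.2
    rw [hp.1] at ha
    intro e he
    rcases List.mem_append.1 he with he | he
    · exact ih hp.1 e he
    · rw [List.mem_singleton.1 he]
      exact ⟨h2, ha⟩

theorem aux_decomp (δ : X → E → Option X) (Eobs : Set E) (S : List E → Set E) (x0 : X)
    (t : List E) (ht : CLLang δ Eobs S x0 t) (α : List E) (σ : E)
    (hp : proj Eobs t = α ++ [σ]) :
    ∃ s w, t = (s ++ [σ]) ++ w ∧ CLLang δ Eobs S x0 s ∧ proj Eobs s = α ∧ σ ∈ S α ∧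
      ∀ e ∈ w, e ∉ Eobs ∧ e ∈ S (α ++ [σ]) := by
  induction ht with
  | nil => simp [proj] at hp
  | snoc s a hs hr ha ih =>
    by_cases h : a ∈ Eobs
    · rw [aux_proj_append, aux_proj_obs Eobs a h] at hp
      obtain ⟨h1, h2⟩ := List.append_inj' hp rfl
      obtain rfl : a = σ := by simpa using h2
      subst h1
      exact ⟨s, [], by simp, hs, rfl, ha, by simp⟩
    · rw [aux_proj_append, aux_proj_uo Eobs [a] (by simpa using h), List.append_nil] at hp
      obtain ⟨s', w, rfl, h1, h2, h3, h4⟩ := ih hp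
      refine ⟨s', w ++ [a], by simp, h1, h2, h3, ?_⟩
      intro e he
      rcases List.mem_append.1 he with he | he
      · exact h4 e he
      · rw [List.mem_singleton.1 he]
        rw [hp] at ha
        exact ⟨h, ha⟩

/-! ## STATEMENT 3 -/
theorem stmt3 [Fintype X] [Fintype E] (δ : X → E → Option X) (Eobs Euo : Set E)
    (hpart : ∀ e, e ∈ Euo ↔ e ∉ Eobs)
    (Euc : Set E) (S : List E → Set E) (hΓ : ∀ α, Euc ⊆ S α) (X0 : Set X) :
    ECest δ Eobs S X0 [] = URset δ Euo (S []) X0 ∧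
      ∀ α σ, σ ∈ Eobs → (α ++ [σ]) ∈ projSet Eobs (CLLangAll δ Eobs S X0) →
        ECest δ Eobs S X0 (α ++ [σ]) =
          URset δ Euo (S (α ++ [σ])) (NXset δ σ (ECest δ Eobs S X0 α)) := by
  constructor
  · ext x
    constructor
    · rintro ⟨x0, hx0, s, hs, hp, hr⟩
      refine ⟨x0, hx0, s, fun e he => ?_, hr⟩
      have := aux_nil δ Eobs S x0 s hs hp e he
      exact ⟨(hpart e).2 this.1, this.2⟩
    · rintro ⟨x0, hx0, s, hs, hr⟩
      have hu : ∀ e ∈ s, e ∉ Eobs := fun e he => (hpart e).1 (hs e he).1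
      refine ⟨x0, hx0, s, ?_, aux_proj_uo Eobs s hu, hr⟩
      have := aux_extend δ Eobs S x0 [] s CLLang.nil
        (fun e he => ⟨hu e he, (hs e he).2⟩) (by simp [hr])
      simpa using this
  · intro α σ hσ hmem
    obtain ⟨t, ⟨y0, _, ht⟩, htp⟩ := hmem
    obtain ⟨_, _, _, _, _, hσS, _⟩ := aux_decomp δ Eobs S y0 t ht α σ htp
    ext x
    constructor
    · rintro ⟨x0, hx0, s, hs, hp, hr⟩
      obtain ⟨u, w, rfl, hu, hup, _, hw⟩ := aux_decomp δ Eobs S x0 s hs α σ hp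
      rw [aux_run_append, aux_run_append] at hr
      obtain ⟨z, hz, hr⟩ := Option.bind_eq_some_iff.1 hr
      obtain ⟨y, hy, hz⟩ := Option.bind_eq_some_iff.1 hz
      refine ⟨z, ⟨y, ⟨x0, hx0, u, hu, hup, hy⟩, by simpa [runStr] using hz⟩, w,
        fun e he => ⟨(hpart e).2 (hw e he).1, (hw e he).2⟩, hr⟩
    · rintro ⟨z, ⟨y, ⟨x0, hx0, u, hu, hup, hy⟩, hz⟩, w, hw, hr⟩
      have hz' : runStr δ x0 (u ++ [σ]) = some z := by
        rw [aux_run_append, hy]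
        simp [runStr, hz]
      have hr' : runStr δ x0 ((u ++ [σ]) ++ w) = some x := by
        rw [aux_run_append, hz']
        exact hr
      have hup' : proj Eobs (u ++ [σ]) = α ++ [σ] := by
        rw [aux_proj_append, aux_proj_obs Eobs σ hσ, hup]
      have hwu : ∀ e ∈ w, e ∉ Eobs := fun e he => (hpart e).1 (hw e he).1
      refine ⟨x0, hx0, (u ++ [σ]) ++ w, ?_, ?_, hr'⟩
      · refine aux_extend δ Eobs S x0 _ w
          (CLLang.snoc u σ hu (by simp [hz']) (by rw [hup]; exact hσS)) ?_ (by rw [hr']; rfl)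
        intro e he
        rw [hup']
        exact ⟨hwu e he, (hw e he).2⟩
      · rw [aux_proj_append, aux_proj_uo Eobs w hwu, hup', List.append_nil]

end DES
end

section
/- (Proposition 3) Let q_e be a positive detected (respectively, negative detected) environment state of the All Attack Structure M. Then every environment state reachable from q_e in M is a positive detected (respectively, negative detected) state. -/
open scoped Classical

namespace DES

variable {X E Z : Type*}

theorem runStr_aug_fst (δ : X → E → Option X) (s : List E) :
    ∀ p y : X × X, runStr (augDelta δ) p s = some y → y.1 = p.1 := by
  induction s with
  | nil =>
    intro p y h
    simp only [runStr, Option.some.injEq] at h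
    rw [h]
  | cons σ s ih =>
    intro p y h
    simp only [runStr, Option.bind_eq_some_iff] at h
    obtain ⟨w, hw, h⟩ := h
    have h1 := ih _ _ h
    simp only [augDelta, Option.map_eq_some_iff] at hw
    obtain ⟨a, _, rfl⟩ := hw
    exact h1

theorem Iset_step (δ : X → E → Option X) (Euo γ : Set E) (σ : E) (qt : Set (X × X)) :
    Iset (NXset (augDelta δ) σ (URset (augDelta δ) Euo γ qt)) ⊆ Iset qt := by
  rintro x ⟨y, ⟨w, ⟨p, hp, s, _, hs⟩, hy⟩, rfl⟩
  refine ⟨p, hp, ?_⟩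
  have h1 := runStr_aug_fst δ s _ _ hs
  simp only [augDelta, Option.map_eq_some_iff] at hy
  obtain ⟨a, _, rfl⟩ := hy
  exact h1.symm

/-- The augmented component of a state of the AAS. -/
def augPart : MState X Z E → Set (X × X)
  | Sum.inl qe => qe.2.1
  | Sum.inr qa => qa.2.1

theorem AASf_step (δ : X → E → Option X) (Eobs Euo Ev : Set E) (ξ : Z → E → Option Z)
    (st st' : MState X Z E) (e : MEvent E) (h : AASf δ Eobs Euo Ev ξ st e = some st') :
    Iset (augPart st') ⊆ Iset (augPart st) := by
  rcases st with ⟨q, qt, _ | z⟩ | ⟨q, qt, z, σ⟩ <;> rcases e with τ | a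
  · simp [AASf] at h
  · simp [AASf] at h
  · simp only [AASf] at h
    split_ifs at h
    cases h
    exact subset_rfl
  · simp [AASf] at h
  · simp [AASf] at h
  · rcases a with _ | a <;> simp only [AASf] at h <;> split_ifs at h
    · cases h
      exact Iset_step ..
    · cases h
      exact Iset_step ..
    · rw [Option.map_eq_some_iff] at h
      obtain ⟨z', _, rfl⟩ := h
      exact Iset_step ..
    · cases h
      exact Iset_step ..

theorem AASf_run (δ : X → E → Option X) (Eobs Euo Ev : Set E) (ξ : Z → E → Option Z)
    (t : List (MEvent E)) : ∀ st st' : MState X Z E,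
    runStr (AASf δ Eobs Euo Ev ξ) st t = some st' →
    Iset (augPart st') ⊆ Iset (augPart st) := by
  induction t with
  | nil =>
    intro p y h
    simp only [runStr, Option.some.injEq] at h
    rw [h]
  | cons σ s ih =>
    intro p y h
    simp only [runStr, Option.bind_eq_some_iff] at h
    obtain ⟨w, hw, h⟩ := h
    exact (ih _ _ h).trans (AASf_step _ _ _ _ _ _ _ _ hw)

/-! ## STATEMENT 10 (Proposition 3) -/
theorem stmt10 [Fintype X] [Fintype E] [Fintype Z] (δ : X → E → Option X)
    (Eobs Euo Ev : Set E) (hpart : ∀ e, e ∈ Euo ↔ e ∉ Eobs) (hv : Ev ⊆ Eobs)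
    (Euc : Set E) (S : List E → Set E) (hΓ : ∀ α, Euc ⊆ S α) (X0 : Set X)
    (ξ : Z → E → Option Z) (z0 : Z) (hreal : Realizes ξ z0 δ Eobs S X0)
    (Xsec : Set X) (hsec : Xsec ⊆ X0)
    (qe qe' : EnvState X Z) (t : List (MEvent E))
    (hreach : runStr (AASf δ Eobs Euo Ev ξ) (Sum.inl qe) t = some (Sum.inl qe')) :
    (PosDet Xsec qe → PosDet Xsec qe') ∧ (NegDet Xsec qe → NegDet Xsec qe') := by
  have h : Iset qe'.2.1 ⊆ Iset qe.2.1 := AASf_run δ Eobs Euo Ev ξ t _ _ hreach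
  refine ⟨fun hp => h.trans hp, fun hn => ?_⟩
  exact Set.subset_empty_iff.mp ((Set.inter_subset_inter_left _ h).trans hn.subset)

end DES
end

section
/- (Proposition 4) Let q_e be an undetectable environment state of the All Attack Structure M. Then every environment state reachable from q_e in M is either an undetectable state or a negative detected state. -/
open scoped Classical

namespace DES

variable {X E Z : Type*}

theorem runStr_aug (δ : X → E → Option X) (s : List E) : ∀ p : X × X,
    runStr (augDelta δ) p s = (runStr δ p.2 s).map fun y => (p.1, y) := by
  induction s with
  | nil => intro p; simp [runStr]
  | cons e s ih =>
    intro p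
    simp only [runStr, augDelta]
    cases h : δ p.2 e with
    | none => simp
    | some y => simpa using ih (p.1, y)

/-- Every secret pair has a non-secret companion. -/
def Wcov (Xsec : Set X) (qt : Set (X × X)) : Prop :=
  ∀ p ∈ qt, p.1 ∈ Xsec → ∃ p' ∈ qt, p'.2 = p.2 ∧ p'.1 ∉ Xsec

theorem Wcov_UR (δ : X → E → Option X) (Euo γ : Set E) (Xsec : Set X) (qt : Set (X × X))
    (h : Wcov Xsec qt) : Wcov Xsec (URset (augDelta δ) Euo γ qt) := by
  rintro p ⟨x, hx, s, hs, hr⟩ hp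
  rw [runStr_aug, Option.map_eq_some_iff] at hr
  obtain ⟨y, hy, rfl⟩ := hr
  obtain ⟨x', hx', h2, h1⟩ := h x hx hp
  refine ⟨(x'.1, y), ⟨x', hx', s, hs, ?_⟩, rfl, h1⟩
  rw [runStr_aug, h2, hy]; rfl

theorem Wcov_NX (δ : X → E → Option X) (σ : E) (Xsec : Set X) (qt : Set (X × X))
    (h : Wcov Xsec qt) : Wcov Xsec (NXset (augDelta δ) σ qt) := by
  rintro p ⟨x, hx, hr⟩ hp
  simp only [augDelta, Option.map_eq_some_iff] at hr
  obtain ⟨y, hy, rfl⟩ := hr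
  obtain ⟨x', hx', h2, h1⟩ := h x hx hp
  refine ⟨(x'.1, y), ⟨x', hx', ?_⟩, rfl, h1⟩
  simp [augDelta, h2, hy]

/-- The invariant preserved along runs of the AAS. -/
def GoodSt (δ : X → E → Option X) (Euo : Set E) (ξ : Z → E → Option Z) (Xsec : Set X) :
    MState X Z E → Prop
  | Sum.inl qe => Wcov Xsec (URset (augDelta δ) Euo (ΔHopt ξ qe.2.2) qe.2.1)
  | Sum.inr qa => Wcov Xsec (URset (augDelta δ) Euo (ΔH ξ qa.2.2.1) qa.2.1)

theorem GoodSt_step (δ : X → E → Option X) (Eobs Euo Ev : Set E) (ξ : Z → E → Option Z)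
    (Xsec : Set X) (st st' : MState X Z E) (e : MEvent E)
    (h : GoodSt δ Euo ξ Xsec st) (hs : AASf δ Eobs Euo Ev ξ st e = some st') :
    GoodSt δ Euo ξ Xsec st' := by
  rcases st with ⟨q, qt, _ | z⟩ | ⟨q, qt, z, σ⟩ <;> rcases e with σ' | a
  · simp [AASf] at hs
  · simp [AASf] at hs
  · simp only [AASf] at hs
    split_ifs at hs
    cases hs
    exact h
  · simp [AASf] at hs
  · simp [AASf] at hs
  · have key := Wcov_NX δ σ Xsec _ h
    simp only [AASf] at hs
    split_ifs at hs
    · cases a with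
      | none => cases hs; exact Wcov_UR _ _ _ _ _ key
      | some σa =>
        simp only [Option.map_eq_some_iff] at hs
        obtain ⟨z', _, rfl⟩ := hs
        exact Wcov_UR _ _ _ _ _ key
    · cases hs; exact Wcov_UR _ _ _ _ _ key

theorem GoodSt_run (δ : X → E → Option X) (Eobs Euo Ev : Set E) (ξ : Z → E → Option Z)
    (Xsec : Set X) (t : List (MEvent E)) : ∀ st st' : MState X Z E,
    GoodSt δ Euo ξ Xsec st → runStr (AASf δ Eobs Euo Ev ξ) st t = some st' →
    GoodSt δ Euo ξ Xsec st' := by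
  induction t with
  | nil => intro st st' h hr; simp only [runStr] at hr; cases hr; exact h
  | cons e t ih =>
    intro st st' h hr
    simp only [runStr, Option.bind_eq_some_iff] at hr
    obtain ⟨y, hy, hr⟩ := hr
    exact ih y st' (GoodSt_step _ _ _ _ _ _ _ _ _ h hy) hr

/-! ## STATEMENT 11 (Proposition 4) -/
theorem stmt11 [Fintype X] [Fintype E] [Fintype Z] (δ : X → E → Option X)
    (Eobs Euo Ev : Set E) (hpart : ∀ e, e ∈ Euo ↔ e ∉ Eobs) (hv : Ev ⊆ Eobs)
    (Euc : Set E) (S : List E → Set E) (hΓ : ∀ α, Euc ⊆ S α) (X0 : Set X)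
    (ξ : Z → E → Option Z) (z0 : Z) (hreal : Realizes ξ z0 δ Eobs S X0)
    (Xsec : Set X) (hsec : Xsec ⊆ X0)
    (qe qe' : EnvState X Z) (t : List (MEvent E))
    (hqe : Undet δ Euo ξ Xsec qe)
    (hreach : runStr (AASf δ Eobs Euo Ev ξ) (Sum.inl qe) t = some (Sum.inl qe')) :
    Undet δ Euo ξ Xsec qe' ∨ NegDet Xsec qe' := by
  have hg := GoodSt_run δ Eobs Euo Ev ξ Xsec t (Sum.inl qe) (Sum.inl qe') hqe.2 hreach
  rcases Set.eq_empty_or_nonempty (Iset qe'.2.1 ∩ Xsec) with h | h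
  · exact Or.inr h
  · exact Or.inl ⟨h, hg⟩

end DES
end

section
/- Let m be a single attack structure of the simplified AAS M^s with induced attack strategy A_m. Then for every observation α ∈ P(L(S_{A_m}/G)) such that obs⁻¹_m(α) exists, the extended string determined by A_m coincides with the unique extended string of m: α_{A_m} = obs⁻¹_m(α). -/
open scoped Classical

namespace DES

variable {X E Z : Type*}

theorem aux_runStr_append {A B : Type*} (f : A → B → Option A) (x : A) (s t : List B) :
    runStr f x (s ++ t) = (runStr f x s).bind fun y => runStr f y t := by
  induction s generalizing x with
  | nil => simp [runStr]
  | cons a s ih =>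
    simp only [List.cons_append, runStr]
    cases f x a with
    | none => rfl
    | some y => simpa using ih y

theorem aux_runStr_snoc {A B : Type*} (f : A → B → Option A) (x y : A) (s : List B) (e : B)
    (hr : runStr f x (s ++ [e]) = some y) : ∃ w, runStr f x s = some w ∧ f w e = some y := by
  rw [aux_runStr_append] at hr
  cases hs : runStr f x s with
  | none => simp [hs] at hr
  | some w =>
    refine ⟨w, rfl, ?_⟩
    simp only [hs, Option.bind_some, runStr] at hr
    cases hw : f w e with
    | none => simp [hw] at hr
    | some v => simpa [hw] using hr

theorem aux_step_env (δ : X → E → Option X) (Eobs Euo Ev : Set E) (ξ : Z → E → Option Z)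
    (Xsec : Set X) (st : MState X Z E) (e : MEvent E) (qe : EnvState X Z)
    (hs : SAASf δ Eobs Euo Ev ξ Xsec st e = some (Sum.inl qe)) :
    ∃ qa a, st = Sum.inr qa ∧ e = Sum.inr a := by
  rcases st with ⟨q, qt, _ | z⟩ | qa <;> rcases e with σ | a
  · simp [SAASf, AASf] at hs
  · simp [SAASf, AASf] at hs
  · simp [SAASf, AASf] at hs
  · simp [SAASf, AASf] at hs
  · simp [SAASf, AASf] at hs
  · exact ⟨qa, a, rfl, rfl⟩

theorem aux_step_atk (δ : X → E → Option X) (Eobs Euo Ev : Set E) (ξ : Z → E → Option Z)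
    (Xsec : Set X) (st : MState X Z E) (e : MEvent E) (qa : AtkState X Z E)
    (hs : SAASf δ Eobs Euo Ev ξ Xsec st e = some (Sum.inr qa)) :
    ∃ qe σ, st = Sum.inl qe ∧ e = Sum.inl σ := by
  rcases st with qe | ⟨q, qt, z, τ⟩ <;> rcases e with σ | a
  · exact ⟨qe, σ, rfl, rfl⟩
  · rcases qe with ⟨q, qt, _ | z⟩ <;> simp [SAASf, AASf] at hs
  · simp [SAASf, AASf] at hs
  · exfalso
    rcases a with _ | a
    · simp only [SAASf, AASf] at hs
      split_ifs at hs <;> simp at hs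
    · simp only [SAASf, AASf] at hs
      split_ifs at hs <;> simp at hs

theorem aux_extStr_snoc (A : List E → Option E) (pre α : List E) (σ : E) :
    extStr A pre (α ++ [σ]) =
      extStr A pre α ++ [Sum.inl σ, Sum.inr (A (pre ++ α ++ [σ]))] := by
  induction α generalizing pre with
  | nil => simp [extStr]
  | cons a α ih => simp [extStr, ih]

theorem aux_lang_prefix (δ : X → E → Option X) (Eobs : Set E) (X0 : Set X) (α β : List E)
    (hm : α ++ β ∈ projSet Eobs (Lang δ X0)) : α ∈ projSet Eobs (Lang δ X0) := by
  obtain ⟨s, ⟨x0, hx0, hs⟩, hp⟩ := hm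
  obtain ⟨s1, s2, rfl, h1, -⟩ := List.filter_eq_append_iff.1 hp
  refine ⟨s1, ⟨x0, hx0, ?_⟩, h1⟩
  simp only [LangFrom, Set.mem_setOf_eq, aux_runStr_append] at hs ⊢
  cases hr : runStr δ x0 s1 with
  | none => simp [hr] at hs
  | some y => rfl

theorem aux_cl_lang (δ : X → E → Option X) (Eobs : Set E) (S : List E → Set E) (x0 : X)
    (s : List E) (hs : CLLang δ Eobs S x0 s) : s ∈ LangFrom δ x0 := by
  cases hs with
  | nil => simp [LangFrom, runStr]
  | snoc s σ h1 h2 h3 => exact h2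

theorem aux_main (δ : X → E → Option X) (Eobs Euo Ev : Set E) (X0 : Set X)
    (ξ : Z → E → Option Z) (z0 : Z) (Xsec : Set X)
    (fm : MState X Z E → MEvent E → Option (MState X Z E))
    (hm : ∀ st e st', fm st e = some st' → SAASf δ Eobs Euo Ev ξ Xsec st e = some st')
    (Am : List E → Option E) (hInd : InducedStrategy δ Eobs X0 fm z0 Am) (n : ℕ) :
    ∀ h : List (MEvent E), h.length ≤ n → obs h ∈ projSet Eobs (Lang δ X0) →
      LeM fm (AASq0 X0 z0) h → extStr Am [] (obs h) = h := by
  induction n with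
  | zero =>
    intro h hl _ _
    obtain rfl : h = [] := List.length_eq_zero_iff.1 (by omega)
    rfl
  | succ n ih =>
    intro h hl hL hle
    have hle' := hle
    obtain ⟨qe, hq⟩ := hle
    rcases List.eq_nil_or_concat h with rfl | ⟨h1, e, rfl⟩
    · rfl
    rw [List.concat_eq_append] at *
    obtain ⟨w, hw, hwe⟩ := aux_runStr_snoc _ _ _ _ _ hq
    obtain ⟨qa, a, rfl, rfl⟩ := aux_step_env _ _ _ _ _ _ _ _ _ (hm _ _ _ hwe)
    rcases List.eq_nil_or_concat h1 with rfl | ⟨h2, e, rfl⟩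
    · simp [runStr, AASq0] at hw
    rw [List.concat_eq_append] at *
    obtain ⟨v, hv, hve⟩ := aux_runStr_snoc _ _ _ _ _ hw
    obtain ⟨qe', σ, rfl, rfl⟩ := aux_step_atk _ _ _ _ _ _ _ _ _ (hm _ _ _ hve)
    have ho : obs (h2 ++ [Sum.inl σ] ++ [Sum.inr a]) = obs h2 ++ [σ] := by
      simp [obs]
    rw [ho] at hL ⊢
    have hlast := (hInd.2 _ _ hL).2 _ hle' ho
    simp at hlast
    rw [aux_extStr_snoc, ih h2 (by simp at hl; omega) (aux_lang_prefix _ _ _ _ _ hL) ⟨qe', hv⟩]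
    simp [hlast]

/-! ## STATEMENT 13 -/
theorem stmt13 [Fintype X] [Fintype E] [Fintype Z] (δ : X → E → Option X)
    (Eobs Euo Ev : Set E) (hpart : ∀ e, e ∈ Euo ↔ e ∉ Eobs) (hv : Ev ⊆ Eobs)
    (Euc : Set E) (S : List E → Set E) (hΓ : ∀ α, Euc ⊆ S α) (X0 : Set X)
    (ξ : Z → E → Option Z) (z0 : Z) (hreal : Realizes ξ z0 δ Eobs S X0)
    (Xsec : Set X) (hsec : Xsec ⊆ X0)
    (fm : MState X Z E → MEvent E → Option (MState X Z E))
    (hm : IsSAS δ Eobs Euo Ev ξ z0 X0 Xsec fm)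
    (Am : List E → Option E) (hInd : InducedStrategy δ Eobs X0 fm z0 Am)
    (α : List E)
    (hmem : α ∈ projSet Eobs (CLLangAll δ Eobs (fun β => S (gA Am β)) X0))
    (h : List (MEvent E)) (hh : LeM fm (AASq0 X0 z0) h) (hobs : obs h = α) :
    extStr Am [] α = h := by
  obtain ⟨s, ⟨x0, hx0, hs⟩, hp⟩ := hmem
  subst hobs
  exact aux_main δ Eobs Euo Ev X0 ξ z0 Xsec fm hm.1 Am hInd _ h le_rfl
    ⟨s, ⟨x0, hx0, aux_cl_lang _ _ _ _ _ hs⟩, hp⟩ hh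

end DES
end
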